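/- Let N be a nonempty finite set, (K,V) a finite simplicial complex, f : K → PN a subdivision, I a nonempty finite set, (c_i)_{i∈I} a family of Sperner colorings of f, and m : I → ℕ a family of sizes with ∑_{i∈I} m i = |N| − 1. Then there exists a face σ ∈ K such that |c_i(σ)| > m i for every i ∈ I and ⋃_{i∈I} c_i(σ) = N. -/

import Mathlib

open scoped Classical

/-- A finite simplicial complex on the vertex set `V`: a collection of finite subsets of `V`
(faces) closed under taking subsets. -/
def IsComplex {V : Type*} (K : Finset (Finset V)) : Prop :=
  ∀ A ∈ K, ∀ B, B ⊆ A → B ∈ K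

/-- The support of `k : V → ℝ`, i.e. `{v : k v > 0}`. -/
noncomputable def spt {V : Type*} [Fintype V] (k : V → ℝ) : Finset V :=
  Finset.univ.filter (fun v => 0 < k v)

/-- The geometric realization of a complex `K` as a subspace of `ℝ^V`. -/
def realization {V : Type*} [Fintype V] (K : Finset (Finset V)) : Set (V → ℝ) :=
  {k | (∀ v, 0 ≤ k v) ∧ ∑ v, k v = 1 ∧ spt k ∈ K}

/-- `f` is an order preserving map from `K` to `K'`:
`A ⊆ B ∈ K` implies `f A ⊆ f B ∈ K'`. -/
def IsOrderPreserving {V V' : Type*} (K : Finset (Finset V)) (K' : Finset (Finset V'))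
    (f : Finset V → Finset V') : Prop :=
  ∀ A B, B ∈ K → A ⊆ B → f A ⊆ f B ∧ f B ∈ K'

/-- `f` is a subdivision: an order preserving map `K → K'` for which there is a homeomorphism
`h : |K| → |K'|` with `spt (h k) = f (spt k)` for all `k ∈ |K|`. -/
def IsSubdivision {V V' : Type*} [Fintype V] [Fintype V'] (K : Finset (Finset V))
    (K' : Finset (Finset V')) (f : Finset V → Finset V') : Prop :=
  IsOrderPreserving K K' f ∧
  ∃ h : realization K ≃ₜ realization K',
    ∀ k : realization K, spt ((h k : V' → ℝ)) = f (spt (k : V → ℝ))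

/-- A Sperner coloring of a subdivision `f : K → K'`: a simplicial map `c : K → K'`
(induced by a vertex map) with `c A ⊆ f A` for every face `A ∈ K`. -/
def IsSpernerColoring {V V' : Type*} [DecidableEq V'] (K : Finset (Finset V))
    (K' : Finset (Finset V')) (f : Finset V → Finset V')
    (c : Finset V → Finset V') : Prop :=
  (∃ c₀ : V → V', ∀ A : Finset V, c A = A.image c₀) ∧
  (∀ A ∈ K, c A ∈ K') ∧ (∀ A ∈ K, c A ⊆ f A)

/-!
A continuous self-map of the simplex on `N` that preserves faces is surjective. Each Sperner
coloring, extended affinely over the faces of `K` and composed with the homeomorphism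
`|PN| → |K|`, is such a map, and so is every convex combination of them. Give the `i`-th coloring a
weight slightly above `m i / |N|` and take a point that the combination sends to the barycenter.
The coloring `c i` spreads its weight over `c i σ`, where `σ` is the face carrying that point, and
no vertex receives more than `1 / |N|` in total, so `|c i σ| > m i`; every vertex receives a
positive amount, so the sets `c i σ` cover `N`.

Surjectivity follows from the dual Knaster–Kuratowski–Mazurkiewicz theorem applied to the sets where
the `i`-th coordinate of the map is at most that of the target. The dual theorem is the limit of
Scarf's combinatorial lemma on finer and finer grids. For points with distinct coordinates (ties are
broken lexicographically), Scarf's lemma is a parity argument: the rooms are the primitive sets and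
the doors are the sets, one point smaller, that miss a single fixed color. Every door lies in two
rooms except for the one made of slack vectors, which lies in one, and a room has an odd number of
doors only if it carries all the colors.
-/

section Scarf

variable {X I α : Type*}

lemma card_filter_image_erase_eq_image {β : Type*} [DecidableEq X] [DecidableEq β]
    {S : Finset X} {g : X → β} (h : (S.image g).card + 1 = S.card) :
    (S.filter fun x => (S.erase x).image g = S.image g).card = 2 := by
  obtain ⟨a, ha, b, hb, hab, hgab⟩ : ∃ a ∈ S, ∃ b ∈ S, a ≠ b ∧ g a = g b :=
    Finset.exists_ne_map_eq_of_card_lt_of_maps_to (t := S.image g) (by omega)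
      fun _ => Finset.mem_image_of_mem g
  have image_erase_eq : ∀ p ∈ S, ∀ q ∈ S, p ≠ q → g p = g q →
      (S.erase p).image g = S.image g := by
    intro p hp q hq hpq hg
    conv_rhs => rw [← Finset.insert_erase hp, Finset.image_insert, hg]
    exact (Finset.insert_eq_of_mem
      (Finset.mem_image_of_mem g (Finset.mem_erase.2 ⟨hpq.symm, hq⟩))).symm
  suffices (S.filter fun p => (S.erase p).image g = S.image g) = {a, b} by
    rw [this, Finset.card_pair hab]
  ext p
  simp only [Finset.mem_filter, Finset.mem_insert, Finset.mem_singleton]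
  refine ⟨fun ⟨hp, himage⟩ => ?_, ?_⟩
  · by_contra! hne
    have hinj : Set.InjOn g (S.erase p) := by
      rw [← Finset.card_image_iff, himage, Finset.card_erase_of_mem hp]
      omega
    exact hab (hinj (Finset.mem_erase.2 ⟨hne.1.symm, ha⟩)
      (Finset.mem_erase.2 ⟨hne.2.symm, hb⟩) hgab)
  · rintro (rfl | rfl)
    · exact ⟨ha, image_erase_eq _ ha b hb hab hgab⟩
    · exact ⟨hb, image_erase_eq _ hb a ha hab.symm hgab.symm⟩

lemma even_card_filter_image_erase_eq [DecidableEq X] [Fintype I] [DecidableEq I]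
    {S : Finset X} {c : X → I} (hcard : S.card = Fintype.card I)
    (hS : S.image c ≠ Finset.univ) (i₀ : I) :
    Even (S.filter fun x => (S.erase x).image c = Finset.univ.erase i₀).card := by
  by_cases himage : S.image c = Finset.univ.erase i₀
  · rw [← himage, card_filter_image_erase_eq_image]
    · exact even_two
    · rw [himage, Finset.card_erase_add_one (Finset.mem_univ i₀), hcard, Finset.card_univ]
  · rw [Finset.filter_eq_empty_iff.2, Finset.card_empty]
    · exact Even.zero
    intro x hx hdoor
    have hinsert : S.image c = insert (c x) (Finset.univ.erase i₀) := by
      rw [← hdoor, ← Finset.image_insert, Finset.insert_erase hx]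
    by_cases hcx : c x = i₀
    · exact hS (by rw [hinsert, hcx, Finset.insert_erase (Finset.mem_univ i₀)])
    · exact himage (by simpa [hcx] using hinsert)

variable [LinearOrder α] (r : I → X → α)

/-- The sets whose coordinatewise minimum is not strictly exceeded in every coordinate by a point
of `X`, where `r i x` is the `i`-th coordinate of `x`. Scarf's *primitive sets* are the undominated
sets with as many points as there are coordinates. -/
def Undominated (S : Finset X) : Prop :=
  ∀ y, ∃ i, ∀ x ∈ S, r i y ≤ r i x

/-- `μ i` minimizes the `i`-th coordinate over `D`, for every `i`: the values `r i (μ i)` are the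
coordinates of the lower corner of `D`. -/
def IsMinimizer (D : Finset X) (μ : I → X) : Prop :=
  ∀ i, μ i ∈ D ∧ ∀ x ∈ D, r i (μ i) ≤ r i x

/-- The points strictly above the lower corner of `μ` in all coordinates except possibly `j`: the
candidates to replace `μ j` when the points of `range μ` form a primitive set. -/
def aboveExcept (μ : I → X) (j : I) : Set X :=
  {y | ∀ k, k ≠ j → r k (μ k) < r k y}

/-- Scarf's slack vectors: `e i` is the lowest point in the `i`-th coordinate, and in the other
coordinates it lies above every point that is not a slack vector. -/
structure IsSlack (e : I → X) : Prop where
  lt_of_ne : ∀ {i x}, x ≠ e i → r i (e i) < r i x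
  lt_of_notMem_range : ∀ {i j x}, i ≠ j → x ∉ Set.range e → r i x < r i (e j)

variable {r} {S D : Finset X} {e μ ν : I → X}

lemma Undominated.mono (hS : Undominated r S) (hDS : D ⊆ S) : Undominated r D := fun y =>
  let ⟨i, hi⟩ := hS y
  ⟨i, fun x hx => hi x (hDS hx)⟩

lemma exists_isMinimizer (r : I → X → α) (hD : D.Nonempty) : ∃ μ, IsMinimizer r D μ := by
  choose μ hmem hle using fun i => D.exists_min_image (r i) hD
  exact ⟨μ, fun i => ⟨hmem i, hle i⟩⟩

lemma IsMinimizer.eq_of_subset (hr : ∀ i, Function.Injective (r i)) (hμ : IsMinimizer r D μ)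
    (hν : IsMinimizer r S ν) (hDS : D ⊆ S) {k : I} (hk : ν k ∈ D) : ν k = μ k :=
  hr k (((hν k).2 _ (hDS (hμ k).1)).antisymm ((hμ k).2 _ hk))

lemma Undominated.le_of_mem_aboveExcept (hD : Undominated r D) (hμ : ∀ i, μ i ∈ D) {j : I} {y : X}
    (hy : y ∈ aboveExcept r μ j) : ∀ x ∈ D, r j y ≤ r j x := by
  obtain ⟨i, hi⟩ := hD y
  obtain rfl : i = j := by
    by_contra hij
    exact (hy i hij).not_ge (hi _ (hμ i))
  exact hi

lemma Undominated.eq_of_mem_aboveExcept (hD : Undominated r D) (hμ : ∀ i, μ i ∈ D) {j k : I}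
    {y : X} (hj : y ∈ aboveExcept r μ j) (hk : y ∈ aboveExcept r μ k) : j = k := by
  by_contra hjk
  exact (hk j hjk).not_ge (hD.le_of_mem_aboveExcept hμ hj _ (hμ j))

lemma IsSlack.aboveExcept_nonempty (he : IsSlack r e) (hμ : IsMinimizer r D μ) {t : X}
    (htD : t ∈ D) (ht : t ∉ Set.range e) (j : I) : (aboveExcept r μ j).Nonempty :=
  ⟨e j, fun k hk => ((hμ k).2 t htD).trans_lt (he.lt_of_notMem_range hk ht)⟩

lemma IsSlack.le (he : IsSlack r e) (i : I) (x : X) : r i (e i) ≤ r i x := by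
  rcases eq_or_ne x (e i) with rfl | hx
  · exact le_rfl
  · exact (he.lt_of_ne hx).le

section Replacement

variable [DecidableEq X]

lemma Undominated.image_minimizer_eq [Fintype I] (hr : ∀ i, Function.Injective (r i))
    (hD : Undominated r D) (hμ : IsMinimizer r D μ) : Finset.univ.image μ = D := by
  refine Finset.Subset.antisymm (Finset.image_subset_iff.2 fun i _ => (hμ i).1) fun x hx => ?_
  obtain ⟨i, hi⟩ := hD x
  exact Finset.mem_image.2
    ⟨i, Finset.mem_univ i, hr i (((hμ i).2 x hx).antisymm (hi _ (hμ i).1))⟩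

lemma Undominated.insert_of_isMaxOn (hD : Undominated r D) (hμ : IsMinimizer r D μ) {j : I} {y : X}
    (hy : y ∈ aboveExcept r μ j) (hmax : IsMaxOn (r j) (aboveExcept r μ j) y) :
    Undominated r (insert y D) := by
  intro z
  by_cases hz : z ∈ aboveExcept r μ j
  · exact ⟨j, Finset.forall_mem_insert _ _ _ |>.2
      ⟨hmax hz, hD.le_of_mem_aboveExcept (fun i => (hμ i).1) hz⟩⟩
  · obtain ⟨k, hkj, hzk⟩ : ∃ k, k ≠ j ∧ r k z ≤ r k (μ k) := by
      simpa [aboveExcept] using hz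
    exact ⟨k, Finset.forall_mem_insert _ _ _ |>.2
      ⟨hzk.trans (hy k hkj).le, fun x hx => hzk.trans ((hμ k).2 x hx)⟩⟩

lemma Undominated.exists_isMaxOn_of_insert [Fintype I] [DecidableEq I]
    (hr : ∀ i, Function.Injective (r i)) (hμ : IsMinimizer r D μ)
    (hcard : D.card + 1 = Fintype.card I) {y : X} (hyD : y ∉ D)
    (hy : Undominated r (insert y D)) :
    ∃ j, (Finset.univ.erase j).image μ = D ∧ y ∈ aboveExcept r μ j ∧
      IsMaxOn (r j) (aboveExcept r μ j) y := by
  obtain ⟨ν, hν⟩ := exists_isMinimizer r (Finset.insert_nonempty y D)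
  have himage : Finset.univ.image ν = insert y D := hy.image_minimizer_eq hr hν
  have hinj : Function.Injective ν := by
    rw [← Set.injOn_univ, ← Finset.coe_univ, ← Finset.card_image_iff, himage,
      Finset.card_insert_of_notMem hyD, hcard, Finset.card_univ]
  obtain ⟨j, -, rfl⟩ := Finset.mem_image.1 (himage ▸ Finset.mem_insert_self y D)
  have hνμ : ∀ k, k ≠ j → ν k = μ k := fun k hk =>
    hμ.eq_of_subset hr hν (Finset.subset_insert _ _)
      ((Finset.mem_insert.1 (hν k).1).resolve_left (hinj.ne hk))
  have hmem : ν j ∈ aboveExcept r μ j := fun k hk => by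
    rw [← hνμ k hk]
    exact ((hν k).2 _ (Finset.mem_insert_self _ _)).lt_of_ne ((hr k).ne (hinj.ne hk))
  refine ⟨j, ?_, hmem, fun z hz => ?_⟩
  · calc (Finset.univ.erase j).image μ
        = (Finset.univ.erase j).image ν :=
          Finset.image_congr fun k hk => (hνμ k (Finset.ne_of_mem_erase hk)).symm
      _ = D := by
          rw [Finset.image_erase hinj, himage, Finset.erase_insert hyD]
  · exact hy.le_of_mem_aboveExcept (fun i => Finset.mem_insert_of_mem (hμ i).1) hz _
      (Finset.mem_insert_self _ _)

lemma Undominated.card_filter_insert_eq_two [Fintype X] [Fintype I]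
    (hr : ∀ i, Function.Injective (r i)) (hD : Undominated r D) (hμ : IsMinimizer r D μ)
    (hcard : D.card + 1 = Fintype.card I) (hne : ∀ j, (aboveExcept r μ j).Nonempty) :
    (Finset.univ.filter fun y => y ∉ D ∧ Undominated r (insert y D)).card = 2 := by
  choose m hm hmax using fun j =>
    (aboveExcept r μ j).exists_max_image (r j) (Set.toFinite _) (hne j)
  have himage : Finset.univ.image μ = D := hD.image_minimizer_eq hr hμ
  have hm_inj : Function.Injective m := fun j k hjk =>
    hD.eq_of_mem_aboveExcept (fun i => (hμ i).1) (hm j) (hjk ▸ hm k)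
  have hreplace : (Finset.univ.filter fun y => y ∉ D ∧ Undominated r (insert y D)) =
      (Finset.univ.filter fun j =>
        (Finset.univ.erase j).image μ = Finset.univ.image μ).image m := by
    rw [himage]
    ext y
    simp only [Finset.mem_filter_univ, Finset.mem_image]
    constructor
    · rintro ⟨hyD, hy⟩
      obtain ⟨j, hj, hyj, hymax⟩ := hy.exists_isMaxOn_of_insert hr hμ hcard hyD
      exact ⟨j, hj, hr j ((hymax (hm j)).antisymm (hmax j y hyj))⟩
    · rintro ⟨j, hj, rfl⟩
      refine ⟨fun hmD => ?_, hD.insert_of_isMaxOn hμ (hm j) (hmax j)⟩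
      obtain ⟨k, hk, hkm⟩ := Finset.mem_image.1 (hj ▸ hmD)
      exact (hm j k (Finset.ne_of_mem_erase hk)).ne (congrArg (r k) hkm)
  rw [hreplace, Finset.card_image_of_injective _ hm_inj]
  exact card_filter_image_erase_eq_image (by rw [himage, hcard, Finset.card_univ])

lemma IsSlack.undominated_image_erase [Fintype I] [DecidableEq I] (he : IsSlack r e) (i₀ : I) :
    Undominated r ((Finset.univ.erase i₀).image e) := by
  intro y
  by_cases hy : y ∈ Set.range e
  · obtain ⟨k, rfl⟩ := hy
    exact ⟨k, fun x _ => he.le k x⟩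
  · refine ⟨i₀, Finset.forall_mem_image.2 fun k hk => ?_⟩
    exact (he.lt_of_notMem_range (Finset.ne_of_mem_erase hk).symm hy).le

lemma card_image_erase_add_one [Fintype I] [DecidableEq I] (hinj : Function.Injective e) (i₀ : I) :
    ((Finset.univ.erase i₀).image e).card + 1 = Fintype.card I := by
  rw [Finset.card_image_of_injective _ hinj, Finset.card_erase_add_one (Finset.mem_univ i₀),
    Finset.card_univ]

lemma IsSlack.undominated_insert_image_erase_iff [Fintype I] [DecidableEq I]
    (he : IsSlack r e) {i₀ : I} {y : X} :
    Undominated r (insert y ((Finset.univ.erase i₀).image e)) ↔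
      ∀ z ∉ (Finset.univ.erase i₀).image e, r i₀ z ≤ r i₀ y := by
  have hslack : ∀ k, k ≠ i₀ → e k ∈ (Finset.univ.erase i₀).image e := fun k hk =>
    Finset.mem_image_of_mem e (Finset.mem_erase.2 ⟨hk, Finset.mem_univ k⟩)
  constructor
  · intro h z hz
    obtain ⟨i, hi⟩ := h z
    obtain rfl : i = i₀ := by
      by_contra hne
      have hzi : z ≠ e i := fun h => hz (h ▸ hslack i hne)
      exact (he.lt_of_ne hzi).not_ge (hi _ (Finset.mem_insert_of_mem (hslack i hne)))
    exact hi y (Finset.mem_insert_self _ _)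
  · intro hmax z
    by_cases hz : z ∈ Set.range e
    · obtain ⟨k, rfl⟩ := hz
      exact ⟨k, fun x _ => he.le k x⟩
    · refine ⟨i₀, Finset.forall_mem_insert _ _ _ |>.2
        ⟨hmax z (mt (Finset.mem_image.1 · |>.imp fun _ => And.right) hz),
          Finset.forall_mem_image.2 fun k hk => ?_⟩⟩
      exact (he.lt_of_notMem_range (Finset.ne_of_mem_erase hk).symm hz).le

variable [Fintype X] [Fintype I]

/-- The undominated sets with as many points as there are coordinates. -/
noncomputable def primitiveSets (r : I → X → α) : Finset (Finset X) :=
  Finset.univ.filter fun S => Undominated r S ∧ S.card = Fintype.card I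

/-- The undominated sets with one point less than a primitive set that carry every color
except `i₀`. They are the doors, and the primitive sets the rooms, of the parity argument. -/
noncomputable def doors [DecidableEq I] (r : I → X → α) (c : X → I) (i₀ : I) : Finset (Finset X) :=
  Finset.univ.filter fun D =>
    Undominated r D ∧ D.card + 1 = Fintype.card I ∧ D.image c = Finset.univ.erase i₀

lemma card_filter_covBy_primitiveSets (hcard : D.card + 1 = Fintype.card I) :
    ((primitiveSets r).filter fun S => D ⋖ S).card =
      (Finset.univ.filter fun y => y ∉ D ∧ Undominated r (insert y D)).card := by
  symm
  refine Finset.card_bij (fun y _ => insert y D) (fun y hy => ?_) (fun y hy z _ hyz => ?_)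
    fun S hS => ?_
  · obtain ⟨hyD, hy⟩ := Finset.mem_filter_univ _ |>.1 hy
    simp [primitiveSets, hy, hcard, hyD, Finset.covBy_insert]
  · exact (Finset.insert_inj (Finset.mem_filter_univ _ |>.1 hy).1).1 hyz
  · obtain ⟨hS, hDS⟩ := Finset.mem_filter.1 hS
    obtain ⟨y, hyD, rfl⟩ := hDS.exists_finset_insert
    exact ⟨y, Finset.mem_filter_univ _ |>.2 ⟨hyD, (Finset.mem_filter_univ _ |>.1 hS).1⟩, rfl⟩

variable [DecidableEq I] {c : X → I} {i₀ : I}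

lemma card_filter_doors_covBy (hS : S ∈ primitiveSets r) :
    ((doors r c i₀).filter fun D => D ⋖ S).card =
      (S.filter fun x => (S.erase x).image c = Finset.univ.erase i₀).card := by
  obtain ⟨hdom, hcard⟩ := Finset.mem_filter_univ _ |>.1 hS
  symm
  refine Finset.card_bij (fun x _ => S.erase x) (fun x hx => ?_) (fun x hx z hz hxz => ?_)
    fun D hD => ?_
  · obtain ⟨hxS, hx⟩ := Finset.mem_filter.1 hx
    refine Finset.mem_filter.2 ⟨Finset.mem_filter_univ _ |>.2 ⟨?_, ?_, hx⟩, Finset.erase_covBy hxS⟩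
    · exact hdom.mono (Finset.erase_subset _ _)
    · rw [Finset.card_erase_add_one hxS, hcard]
  · exact S.erase_injOn (Finset.mem_filter.1 hx).1 (Finset.mem_filter.1 hz).1 hxz
  · obtain ⟨hD, hDS⟩ := Finset.mem_filter.1 hD
    obtain ⟨x, hxS, rfl⟩ := hDS.exists_finset_erase
    exact ⟨x, Finset.mem_filter.2 ⟨hxS, (Finset.mem_filter_univ _ |>.1 hD).2.2⟩, rfl⟩

lemma IsSlack.image_erase_mem_doors (he : IsSlack r e) (hc : Function.LeftInverse c e) (i₀ : I) :
    (Finset.univ.erase i₀).image e ∈ doors r c i₀ :=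
  Finset.mem_filter_univ _ |>.2 ⟨he.undominated_image_erase i₀,
    card_image_erase_add_one hc.injective i₀,
    by rw [Finset.image_image, hc.comp_eq_id, Finset.image_id]⟩

lemma eq_image_erase_of_mem_doors (hc : Function.LeftInverse c e) (hD : D ∈ doors r c i₀)
    (hDe : ∀ x ∈ D, x ∈ Set.range e) : D = (Finset.univ.erase i₀).image e := by
  have hec : Set.EqOn (e ∘ c) id D := fun x hx => by
    obtain ⟨i, rfl⟩ := hDe x hx
    exact congrArg e (hc i)
  rw [← (Finset.mem_filter_univ _ |>.1 hD).2.2, Finset.image_image, Finset.image_congr hec,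
    Finset.image_id]

lemma IsSlack.card_filter_covBy_image_erase (hr : ∀ i, Function.Injective (r i))
    (he : IsSlack r e) (hinj : Function.Injective e) (i₀ : I) :
    ((primitiveSets r).filter fun S => (Finset.univ.erase i₀).image e ⋖ S).card = 1 := by
  rw [card_filter_covBy_primitiveSets (card_image_erase_add_one hinj i₀), Finset.card_eq_one]
  have hi₀ : e i₀ ∈ (Finset.univ.filter fun y => y ∉ (Finset.univ.erase i₀).image e) := by
    simp [hinj.eq_iff]
  obtain ⟨y, hy, hmax⟩ := Finset.exists_max_image _ (r i₀) ⟨_, hi₀⟩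
  simp only [Finset.mem_filter_univ] at hy hmax
  refine ⟨y, ?_⟩
  ext z
  rw [Finset.mem_filter_univ, Finset.mem_singleton]
  constructor
  · rintro ⟨hz, hdom⟩
    exact hr i₀ ((hmax z hz).antisymm (he.undominated_insert_image_erase_iff.1 hdom y hy))
  · rintro rfl
    exact ⟨hy, he.undominated_insert_image_erase_iff.2 hmax⟩

lemma IsSlack.card_filter_covBy_eq_two (hr : ∀ i, Function.Injective (r i)) (he : IsSlack r e)
    (hc : Function.LeftInverse c e) (hD : D ∈ doors r c i₀)
    (hne : D ≠ (Finset.univ.erase i₀).image e) :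
    ((primitiveSets r).filter fun S => D ⋖ S).card = 2 := by
  obtain ⟨hdom, hcard, -⟩ := Finset.mem_filter_univ _ |>.1 hD
  obtain ⟨t, htD, ht⟩ : ∃ t ∈ D, t ∉ Set.range e := by
    by_contra! h
    exact hne (eq_image_erase_of_mem_doors hc hD h)
  obtain ⟨μ, hμ⟩ := exists_isMinimizer r ⟨t, htD⟩
  rw [card_filter_covBy_primitiveSets hcard]
  exact hdom.card_filter_insert_eq_two hr hμ hcard (he.aboveExcept_nonempty hμ htD ht)

end Replacement

lemma IsSlack.exists_mem_primitiveSets_image_eq_univ [Fintype X] [Fintype I] [DecidableEq I]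
    [Nonempty I] {c : X → I} (hr : ∀ i, Function.Injective (r i))
    (he : IsSlack r e) (hc : Function.LeftInverse c e) :
    ∃ S ∈ primitiveSets r, S.image c = Finset.univ := by
  by_contra! hcon
  obtain ⟨i₀⟩ := ‹Nonempty I›
  have hrooms : Even (∑ S ∈ primitiveSets r, ((doors r c i₀).filter fun D => D ⋖ S).card) :=
    Finset.even_sum _ fun S hS => by
      rw [card_filter_doors_covBy hS]
      exact even_card_filter_image_erase_eq (Finset.mem_filter_univ _ |>.1 hS).2 (hcon S hS) i₀
  have hdoors : Even (∑ D ∈ (doors r c i₀).erase ((Finset.univ.erase i₀).image e),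
      ((primitiveSets r).filter fun S => D ⋖ S).card) :=
    Finset.even_sum _ fun D hD => by
      rw [he.card_filter_covBy_eq_two hr hc (Finset.mem_of_mem_erase hD)
        (Finset.ne_of_mem_erase hD)]
      exact even_two
  have hcount : ∑ D ∈ doors r c i₀, ((primitiveSets r).filter fun S => D ⋖ S).card =
      ∑ S ∈ primitiveSets r, ((doors r c i₀).filter fun D => D ⋖ S).card :=
    Finset.sum_card_bipartiteAbove_eq_sum_card_bipartiteBelow _
  rw [← hcount, ← Finset.add_sum_erase _ _ (he.image_erase_mem_doors hc i₀),
    he.card_filter_covBy_image_erase hr hc.injective, Nat.even_add] at hrooms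
  exact Nat.not_even_one (hrooms.2 hdoors)

lemma Undominated.of_toLex {β : Type*} [LinearOrder β] {g : X → β}
    (hS : Undominated (fun i x => toLex (r i x, g x)) S) : Undominated r S := fun y =>
  let ⟨i, hi⟩ := hS y
  ⟨i, fun x hx => Prod.Lex.monotone_fst _ _ (hi x hx)⟩

lemma IsSlack.toLex {β : Type*} [LinearOrder β] (he : IsSlack r e) (g : X → β) :
    IsSlack (fun i x => toLex (r i x, g x)) e where
  lt_of_ne hx := Prod.Lex.toLex_lt_toLex.2 (.inl (he.lt_of_ne hx))
  lt_of_notMem_range hij hx := Prod.Lex.toLex_lt_toLex.2 (.inl (he.lt_of_notMem_range hij hx))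

theorem IsSlack.exists_undominated_image_eq_univ [Finite X] [Fintype I] [DecidableEq I] [Nonempty I]
    {c : X → I} (he : IsSlack r e) (hc : Function.LeftInverse c e) :
    ∃ S, Undominated r S ∧ S.image c = Finset.univ := by
  have := Fintype.ofFinite X
  obtain ⟨S, hS, hSc⟩ := (he.toLex (Fintype.equivFin X)).exists_mem_primitiveSets_image_eq_univ
    (fun i x y hxy => (Fintype.equivFin X).injective (congrArg (fun p => (ofLex p).2) hxy)) hc
  exact ⟨S, (Finset.mem_filter_univ _ |>.1 hS).1.of_toLex, hSc⟩

end Scarf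

section Grid

variable {N : Type*} [Fintype N]

lemma add_one_lt_add_card_of_sum_lt {p a : N → ℕ} (hsum : ∑ i, p i < ∑ i, a i)
    (hle : ∀ i, a i ≤ p i + 1) (l : N) : p l + 1 < a l + Fintype.card N := by
  have hrest : ∑ i ∈ Finset.univ.erase l, a i ≤ ∑ i ∈ Finset.univ.erase l, (p i + 1) :=
    Finset.sum_le_sum fun i _ => hle i
  have htotal : ∑ i, (p i + 1) = ∑ i, p i + Fintype.card N := by
    simp [Finset.sum_add_distrib]
  rw [← Finset.add_sum_erase _ _ (Finset.mem_univ l)] at htotal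
  rw [← Finset.add_sum_erase _ a (Finset.mem_univ l)] at hsum
  omega

variable [DecidableEq N] {k : ℕ}

lemma exists_le_mem_piAntidiag [Nonempty N] {a : N → ℕ} (ha : ∑ i, a i ≤ k) :
    ∃ y ∈ Finset.univ.piAntidiag k, a ≤ y := by
  obtain ⟨i₀⟩ := ‹Nonempty N›
  refine ⟨a + Pi.single i₀ (k - ∑ i, a i), ?_, le_self_add⟩
  simp [Finset.sum_add_distrib, ha]

/-- Coordinates on the points of `ℕ^N` with coordinate sum `k`, together with one slack vector for
every `j : N`. The coordinates of the grid points are shifted by `1` to make room for the value `0`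
of the `j`-th coordinate at the `j`-th slack vector. -/
def gridCoord (k : ℕ) (i : N) : (Finset.univ : Finset N).piAntidiag k ⊕ N → ℕ :=
  Sum.elim (fun x => x.1 i + 1) fun j => if i = j then 0 else k + 2

lemma isSlack_gridCoord (k : ℕ) : IsSlack (gridCoord (N := N) k) Sum.inr where
  lt_of_ne {i x} hx := by
    rcases x with x | j
    · simp [gridCoord]
    · have hij : i ≠ j := fun h => hx (h ▸ rfl)
      simp [gridCoord, hij]
  lt_of_notMem_range {i j x} hij hx := by
    rcases x with x | l
    · have hxk : x.1 i ≤ k :=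
        (Finset.single_le_sum (fun _ _ => Nat.zero_le _) (Finset.mem_univ i)).trans_eq
          (Finset.mem_piAntidiag.1 x.2).1
      simp only [gridCoord, Sum.elim_inl, Sum.elim_inr, if_neg hij]
      omega
    · exact absurd ⟨l, rfl⟩ hx

variable {S : Finset ((Finset.univ : Finset N).piAntidiag k ⊕ N)}
  {μ : N → (Finset.univ : Finset N).piAntidiag k ⊕ N}

lemma IsMinimizer.lt_sum_gridCoord [Nonempty N] (hμ : IsMinimizer (gridCoord k) S μ)
    (hS : Undominated (gridCoord k) S) : k < ∑ i, gridCoord k i (μ i) := by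
  by_contra! hle
  obtain ⟨y, hy, hay⟩ := exists_le_mem_piAntidiag hle
  obtain ⟨i, hi⟩ := hS (Sum.inl ⟨y, hy⟩)
  exact (hay i).not_gt (hi _ (hμ i).1)

lemma IsMinimizer.lt_gridCoord_add_card [Nonempty N] (hμ : IsMinimizer (gridCoord k) S μ)
    (hS : Undominated (gridCoord k) S) {x : (Finset.univ : Finset N).piAntidiag k}
    (hx : Sum.inl x ∈ S) (l : N) : x.1 l + 1 < gridCoord k l (μ l) + Fintype.card N := by
  refine add_one_lt_add_card_of_sum_lt (a := fun i => gridCoord k i (μ i)) ?_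
    (fun i => (hμ i).2 _ hx) l
  rw [(Finset.mem_piAntidiag.1 x.2).1]
  exact hμ.lt_sum_gridCoord hS

lemma IsMinimizer.gridCoord_eq_zero (hμ : IsMinimizer (gridCoord k) S μ) {l : N}
    (hl : Sum.inr l ∈ S) : gridCoord k l (μ l) = 0 := by
  simpa [gridCoord] using (hμ l).2 _ hl

theorem exists_grid_point_near_all_colors [Nonempty N] (k : ℕ) (c : (N → ℕ) → N) :
    ∃ p ∈ Finset.univ.piAntidiag k, ∀ i, p i < Fintype.card N ∨
      ∃ q ∈ Finset.univ.piAntidiag k, c q = i ∧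
        ∀ l, p l < q l + Fintype.card N ∧ q l < p l + Fintype.card N := by
  obtain ⟨S, hS, hSc⟩ := (isSlack_gridCoord k).exists_undominated_image_eq_univ
    (c := Sum.elim (fun x => c x.1) id) fun _ => rfl
  have hcolor : ∀ i, Sum.inr i ∈ S ∨ ∃ q, Sum.inl q ∈ S ∧ c q.1 = i := by
    intro i
    obtain ⟨q | j, hq, rfl⟩ := Finset.mem_image.1 (hSc ▸ Finset.mem_univ i)
    · exact .inr ⟨q, hq, rfl⟩
    · exact .inl hq
  have hne : S.Nonempty := Finset.image_nonempty.1 (hSc ▸ Finset.univ_nonempty)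
  obtain ⟨μ, hμ⟩ := exists_isMinimizer (gridCoord k) hne
  obtain ⟨p, hp⟩ : ∃ p, Sum.inl p ∈ S := by
    obtain ⟨i, -, hi⟩ := Finset.exists_ne_zero_of_sum_ne_zero
      (Nat.zero_le k |>.trans_lt (hμ.lt_sum_gridCoord hS)).ne'
    obtain ⟨q, hq, -⟩ := (hcolor i).resolve_left fun h => hi (hμ.gridCoord_eq_zero h)
    exact ⟨q, hq⟩
  refine ⟨p.1, p.2, fun i => (hcolor i).imp (fun hi => ?_) ?_⟩
  · have := hμ.lt_gridCoord_add_card hS hp i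
    rw [hμ.gridCoord_eq_zero hi] at this
    omega
  · rintro ⟨q, hq, hqi⟩
    refine ⟨q.1, q.2, hqi, fun l => ?_⟩
    have hμp : gridCoord k l (μ l) ≤ p.1 l + 1 := (hμ l).2 _ hp
    have hμq : gridCoord k l (μ l) ≤ q.1 l + 1 := (hμ l).2 _ hq
    have := hμ.lt_gridCoord_add_card hS hp l
    have := hμ.lt_gridCoord_add_card hS hq l
    omega

end Grid

section DualKKM

lemma exists_forall_mem_of_forall_exists_dist_le {X ι : Type*} [PseudoMetricSpace X]
    {K : Set X} (hK : IsCompact K) {B : ι → Set X} (hB : ∀ i, IsClosed (B i))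
    (h : ∀ ε > 0, ∃ p ∈ K, ∀ i, ∃ q ∈ B i, dist p q ≤ ε) : ∃ p ∈ K, ∀ i, p ∈ B i := by
  choose u huK q hqB hq using fun n : ℕ => h (1 / (n + 1)) Nat.one_div_pos_of_nat
  obtain ⟨p, hpK, φ, hφ, hu⟩ := hK.tendsto_subseq huK
  refine ⟨p, hpK, fun i => (hB i).mem_of_tendsto (Filter.Tendsto.congr_dist hu ?_)
    (.of_forall fun n => hqB (φ n) i)⟩
  exact squeeze_zero (fun _ => dist_nonneg) (fun n => hq (φ n) i)
    (tendsto_one_div_add_atTop_nhds_zero_nat.comp hφ.tendsto_atTop)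

variable {N : Type*}

lemma lt_update_zero_add [DecidableEq N] {n : ℕ} {p : N → ℕ} {i : N} (h : p i < n) (l : N) :
    p l < Function.update p i 0 l + n ∧ Function.update p i 0 l < p l + n := by
  rcases eq_or_ne l i with rfl | hl
  · simp only [Function.update_self]
    omega
  · simp only [Function.update_of_ne hl]
    omega

variable [Fintype N]

lemma div_mem_stdSimplex [DecidableEq N] {k : ℕ} (hk : k ≠ 0) {p : N → ℕ}
    (hp : p ∈ Finset.univ.piAntidiag k) : (fun l => (p l / k : ℝ)) ∈ stdSimplex ℝ N := by
  refine ⟨fun l => by positivity, ?_⟩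
  rw [← Finset.sum_div, ← Nat.cast_sum, (Finset.mem_piAntidiag.1 hp).1,
    div_self (Nat.cast_ne_zero.2 hk)]

lemma dist_div_le {k n : ℕ} {p q : N → ℕ} (h : ∀ l, p l < q l + n ∧ q l < p l + n) :
    dist (fun l => (p l / k : ℝ)) (fun l => (q l / k : ℝ)) ≤ n / k := by
  refine (dist_pi_le_iff (by positivity)).2 fun l => ?_
  rw [Real.dist_eq, ← sub_div, abs_div, Nat.abs_cast]
  gcongr
  rw [abs_le]
  constructor
  · linarith [show (q l : ℝ) ≤ p l + n by exact_mod_cast (h l).2.le]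
  · linarith [show (p l : ℝ) ≤ q l + n by exact_mod_cast (h l).1.le]

lemma stdSimplex_exists_forall_exists_dist_le [Nonempty N] {A : N → Set (stdSimplex ℝ N)}
    (hcover : ∀ x, ∃ i, x ∈ A i) {ε : ℝ} (hε : 0 < ε) :
    ∃ p ∈ stdSimplex ℝ N, ∀ i, ∃ q ∈ (↑) '' A i ∪ {x : N → ℝ | x i = 0}, dist p q ≤ ε := by
  obtain ⟨k, hkε⟩ := exists_nat_gt (Fintype.card N / ε)
  have hk : 0 < k := by exact_mod_cast (by positivity : (0 : ℝ) ≤ _).trans_lt hkε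
  have hdist : (Fintype.card N / k : ℝ) ≤ ε := (div_lt_comm₀ hε (by positivity)).1 hkε |>.le
  choose color hcolor using hcover
  obtain ⟨p, hp, hpc⟩ := exists_grid_point_near_all_colors k fun q : N → ℕ =>
    if hq : q ∈ Finset.univ.piAntidiag k then color ⟨_, div_mem_stdSimplex hk.ne' hq⟩
    else Classical.arbitrary N
  refine ⟨_, div_mem_stdSimplex hk.ne' hp, fun i => ?_⟩
  rcases hpc i with hpi | ⟨q, hq, rfl, hpq⟩
  · exact ⟨fun l => (Function.update p i 0 l / k : ℝ), .inr (by simp),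
      (dist_div_le (lt_update_zero_add hpi)).trans hdist⟩
  · refine ⟨_, .inl ⟨⟨_, div_mem_stdSimplex hk.ne' hq⟩, ?_, rfl⟩, (dist_div_le hpq).trans hdist⟩
    rw [dif_pos hq]
    exact hcolor _

theorem stdSimplex_exists_forall_mem [Nonempty N] {A : N → Set (stdSimplex ℝ N)}
    (hclosed : ∀ i, IsClosed (A i)) (hcover : ∀ x, ∃ i, x ∈ A i)
    (hface : ∀ i x, x i = 0 → x ∈ A i) : ∃ x, ∀ i, x ∈ A i := by
  have hclosed_union (i : N) : IsClosed ((↑) '' A i ∪ {x : N → ℝ | x i = 0}) :=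
    ((isClosed_stdSimplex ℝ N).isClosedMap_subtype_val _ (hclosed i)).union
      (isClosed_eq (continuous_apply i) continuous_const)
  obtain ⟨x, hx, hxA⟩ := exists_forall_mem_of_forall_exists_dist_le (isCompact_stdSimplex ℝ N)
    hclosed_union fun ε hε => stdSimplex_exists_forall_exists_dist_le hcover hε
  refine ⟨⟨x, hx⟩, fun i => (hxA i).elim ?_ (hface i ⟨x, hx⟩)⟩
  rintro ⟨a, ha, rfl⟩
  exact ha

theorem stdSimplex_surjective_of_continuous {f : stdSimplex ℝ N → stdSimplex ℝ N}
    (hf : Continuous f) (hface : ∀ x i, x i = 0 → f x i = 0) : Function.Surjective f := by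
  intro t
  have hsum : ∀ x, ∑ i, f x i = ∑ i, t i := fun x =>
    (stdSimplex.sum_eq_one _).trans (stdSimplex.sum_eq_one t).symm
  have hne : (Finset.univ : Finset N).Nonempty :=
    Finset.nonempty_of_sum_ne_zero ((stdSimplex.sum_eq_one t).trans_ne one_ne_zero)
  have := Finset.univ_nonempty_iff.1 hne
  obtain ⟨x, hx⟩ := stdSimplex_exists_forall_mem (A := fun i => {x | f x i ≤ t i})
    (fun i => isClosed_le ((continuous_apply i).comp (continuous_subtype_val.comp hf))
      continuous_const)
    (fun x => (Finset.exists_le_of_sum_le hne (hsum x).le).imp fun i hi => hi.2)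
    fun i x hxi => (hface x i hxi).trans_le (stdSimplex.zero_le t i)
  exact ⟨x, stdSimplex.ext (funext fun i =>
    (Finset.sum_eq_sum_iff_of_le fun i _ => hx i).1 (hsum x) i (Finset.mem_univ i))⟩

end DualKKM

section Coloring

variable {V N I : Type*} [Fintype V] [Fintype N] [Fintype I]

/-- The convex combination with weights `w i` of the affine extensions of the vertex maps `c i` to
the geometric realization. -/
noncomputable def averageColoring (w : stdSimplex ℝ I) (c : I → V → N) (y : stdSimplex ℝ V) :
    stdSimplex ℝ N :=
  ⟨∑ i, w i • ⇑(stdSimplex.map (c i) y),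
    (convex_stdSimplex ℝ N).sum_mem (fun i _ => stdSimplex.zero_le w i) (stdSimplex.sum_eq_one w)
      fun i _ => (stdSimplex.map (c i) y).2⟩

variable {w : stdSimplex ℝ I} {c : I → V → N} {y : stdSimplex ℝ V}

lemma averageColoring_apply (j : N) :
    averageColoring w c y j = ∑ i, w i * stdSimplex.map (c i) y j :=
  Finset.sum_apply _ _ _

lemma continuous_averageColoring : Continuous (averageColoring w c) :=
  Continuous.subtype_mk (continuous_finsetSum _ fun i _ =>
    (continuous_subtype_val.comp (stdSimplex.continuous_map (c i))).const_smul (w i)) _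

variable [DecidableEq N]

lemma stdSimplex_map_pos_iff {φ : V → N} {y : stdSimplex ℝ V} {j : N} :
    0 < stdSimplex.map φ y j ↔ j ∈ (spt (y : V → ℝ)).image φ := by
  rw [stdSimplex.map_coe, FunOnFinite.linearMap_apply_apply,
    Finset.sum_pos_iff_of_nonneg fun v _ => stdSimplex.zero_le y v]
  simp only [spt, Finset.mem_filter_univ, Finset.mem_image]
  exact exists_congr fun v => and_comm

lemma exists_mem_image_of_averageColoring_pos {j : N} (hj : 0 < averageColoring w c y j) :
    ∃ i, j ∈ (spt (y : V → ℝ)).image (c i) := by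
  rw [averageColoring_apply] at hj
  obtain ⟨i, -, hi⟩ := Finset.exists_ne_zero_of_sum_ne_zero hj.ne'
  exact ⟨i, stdSimplex_map_pos_iff.1
    ((stdSimplex.zero_le _ j).lt_of_ne' (right_ne_zero_of_mul hi))⟩

lemma weight_le_sum_averageColoring (i : I) :
    w i ≤ ∑ j ∈ (spt (y : V → ℝ)).image (c i), averageColoring w c y j := by
  have hsum : ∑ j ∈ (spt (y : V → ℝ)).image (c i), stdSimplex.map (c i) y j = 1 := by
    rw [← stdSimplex.sum_eq_one (stdSimplex.map (c i) y)]
    refine Finset.sum_subset (Finset.subset_univ _) fun j _ hj => ?_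
    exact (not_lt.1 (mt stdSimplex_map_pos_iff.1 hj)).antisymm (stdSimplex.zero_le _ j)
  calc w i = ∑ j ∈ (spt (y : V → ℝ)).image (c i), w i * stdSimplex.map (c i) y j := by
        rw [← Finset.mul_sum, hsum, mul_one]
    _ ≤ ∑ j ∈ (spt (y : V → ℝ)).image (c i), averageColoring w c y j := by
        refine Finset.sum_le_sum fun j _ => ?_
        rw [averageColoring_apply]
        exact Finset.single_le_sum (f := fun i => w i * stdSimplex.map (c i) y j)
          (fun i _ => mul_nonneg (stdSimplex.zero_le w i) (stdSimplex.zero_le _ j))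
          (Finset.mem_univ i)

lemma averageColoring_comp_surjective {g : stdSimplex ℝ N → stdSimplex ℝ V} (hg : Continuous g)
    (hc : ∀ x i, (spt (g x : V → ℝ)).image (c i) ⊆ spt (x : N → ℝ)) :
    Function.Surjective fun x => averageColoring w c (g x) := by
  refine stdSimplex_surjective_of_continuous (continuous_averageColoring.comp hg) fun x j hxj => ?_
  by_contra hne
  obtain ⟨i, hi⟩ := exists_mem_image_of_averageColoring_pos
    ((stdSimplex.zero_le (averageColoring w c (g x)) j).lt_of_ne' hne)
  exact (Finset.mem_filter_univ _ |>.1 (hc x i hi)).ne' hxj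

lemma exists_stdSimplex_lt_mul [Nonempty I] {m : I → ℕ} {n : ℕ} (hm : ∑ i, m i < n) :
    ∃ w : stdSimplex ℝ I, ∀ i, (m i : ℝ) < n * w i := by
  have hn : (0 : ℝ) < n := by exact_mod_cast (Nat.zero_le _).trans_lt hm
  have hI : (0 : ℝ) < Fintype.card I := by exact_mod_cast Fintype.card_pos
  have hslack : (0 : ℝ) < (n - ∑ i, (m i : ℝ)) / Fintype.card I :=
    div_pos (sub_pos.2 (by exact_mod_cast hm)) hI
  refine ⟨⟨fun i => (m i + (n - ∑ i, (m i : ℝ)) / Fintype.card I) / n, fun i => by positivity, ?_⟩,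
    fun i => ?_⟩
  · rw [← Finset.sum_div, Finset.sum_add_distrib, Finset.sum_const, Finset.card_univ,
      nsmul_eq_mul, mul_div_cancel₀ _ hI.ne', add_sub_cancel, div_self hn.ne']
  · change (m i : ℝ) < n * ((m i + (n - ∑ i, (m i : ℝ)) / Fintype.card I) / n)
    rw [mul_div_cancel₀ _ hn.ne']
    exact lt_add_of_pos_right _ hslack

theorem exists_forall_lt_card_image [Nonempty I] {g : stdSimplex ℝ N → stdSimplex ℝ V}
    (hg : Continuous g) (hc : ∀ x i, (spt (g x : V → ℝ)).image (c i) ⊆ spt (x : N → ℝ))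
    {m : I → ℕ} (hm : ∑ i, m i < Fintype.card N) :
    ∃ x, (∀ i, m i < ((spt (g x : V → ℝ)).image (c i)).card) ∧
      ∀ j, ∃ i, j ∈ (spt (g x : V → ℝ)).image (c i) := by
  have hN : 0 < Fintype.card N := (Nat.zero_le _).trans_lt hm
  have := Fintype.card_pos_iff.1 hN
  obtain ⟨w, hw⟩ := exists_stdSimplex_lt_mul hm
  obtain ⟨x, hx⟩ := averageColoring_comp_surjective (w := w) hg hc stdSimplex.barycenter
  have hbary (j : N) : averageColoring w c (g x) j = (Fintype.card N : ℝ)⁻¹ :=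
    congrArg (fun t : stdSimplex ℝ N => t j) hx
  refine ⟨x, fun i => ?_, fun j => exists_mem_image_of_averageColoring_pos (w := w) ?_⟩
  · have hwi : w i ≤ ((spt (g x : V → ℝ)).image (c i)).card * (Fintype.card N : ℝ)⁻¹ := by
      simpa only [hbary, Finset.sum_const, nsmul_eq_mul] using
        weight_le_sum_averageColoring (w := w) (c := c) (y := g x) i
    rw [← div_eq_mul_inv, le_div_iff₀' (by exact_mod_cast hN)] at hwi
    exact_mod_cast (hw i).trans_le hwi
  · rw [hbary]
    positivity

theorem multicolored_sperner_general [Nonempty I] {K : Finset (Finset V)}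
    {f : Finset V → Finset N} {g : stdSimplex ℝ N → realization K} (hg : Continuous g)
    (hfg : ∀ x, f (spt (g x : V → ℝ)) ⊆ spt (x : N → ℝ)) {c : I → Finset V → Finset N}
    (hc : ∀ i, IsSpernerColoring K (Finset.univ : Finset (Finset N)) f (c i))
    {m : I → ℕ} (hm : ∑ i, m i < Fintype.card N) :
    ∃ σ ∈ K, (∀ i, m i < (c i σ).card) ∧
      Finset.univ.biUnion (fun i => c i σ) = (Finset.univ : Finset N) := by
  choose c₀ hc₀ using fun i => (hc i).1
  obtain ⟨x, hcard, hunion⟩ := exists_forall_lt_card_image (c := c₀)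
    (g := fun x => ⟨g x, (g x).2.1, (g x).2.2.1⟩)
    ((continuous_subtype_val.comp hg).subtype_mk _)
    (fun x i => (hc₀ i _).symm.trans_subset (((hc i).2.2 _ (g x).2.2.2).trans (hfg x))) hm
  refine ⟨spt (g x : V → ℝ), (g x).2.2.2, fun i => (hc₀ i _).symm ▸ hcard i, ?_⟩
  refine Finset.eq_univ_iff_forall.2 fun j => Finset.mem_biUnion.2 ?_
  obtain ⟨i, hi⟩ := hunion j
  exact ⟨i, Finset.mem_univ i, (hc₀ i _).symm ▸ hi⟩

end Coloring

/-- Meunier's multicolored Sperner lemma: if `f : K → PN` is a subdivision, `(c i)_{i ∈ I}`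
are Sperner colorings of `f` and `m : I → ℕ` satisfies `∑ i, m i = |N| - 1`, then some
face `σ ∈ K` has `|c i σ| > m i` for every `i` and `⋃ i, c i σ = N`. -/
theorem multicolored_sperner {V N I : Type*} [Fintype V] [Fintype N] [Fintype I]
    [DecidableEq N] [Nonempty N] [Nonempty I]
    (K : Finset (Finset V)) (hK : IsComplex K)
    (f : Finset V → Finset N)
    (hf : IsSubdivision K (Finset.univ : Finset (Finset N)) f)
    (c : I → Finset V → Finset N)
    (hc : ∀ i, IsSpernerColoring K (Finset.univ : Finset (Finset N)) f (c i))
    (m : I → ℕ) (hm : ∑ i, m i = Fintype.card N - 1) :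
    ∃ σ ∈ K, (∀ i, m i < (c i σ).card) ∧
      Finset.univ.biUnion (fun i => c i σ) = (Finset.univ : Finset N) := by
  obtain ⟨-, h, hh⟩ := hf
  exact multicolored_sperner_general (g := fun x => h.symm ⟨x, x.2.1, x.2.2, Finset.mem_univ _⟩)
    (by fun_prop) (fun x => by rw [← hh, h.apply_symm_apply]) hc
    (hm.trans_lt (Nat.sub_one_lt Fintype.card_ne_zero))
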